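/- arXiv:1011.3668 — 2 statements merged into one kernel-verified Lean document; each statement's English description precedes it below -/
import Mathlib

section
/- Admissibility of the up fragment: each of the up rules ai↑ (replace (a;ā) by ∘), q↑ (replace (⟨R;T⟩;⟨U;V⟩) by ⟨(R;U);(T;V)⟩), and r↑ (replace (⌊a⌋R;⌊a⌋T) by ⌊a⌋(R;T)) is admissible for BVr: every structure provable in BVr extended with any of these up rules is already provable in BVr. -/
namespace DI

/-- SBVr structures: unit, atoms and their duals, par, copar, seq, renaming binder. -/
inductive Struct : Type
  | unit : Struct
  | atom : ℕ → Struct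
  | natom : ℕ → Struct
  | par : Struct → Struct → Struct
  | copar : Struct → Struct → Struct
  | seq : Struct → Struct → Struct
  | ren : ℕ → Struct → Struct
  deriving DecidableEq

namespace Struct

/-- Negation of structures (De Morgan: swaps par/copar, fixes seq and renaming). -/
def neg : Struct → Struct
  | unit => unit
  | atom a => natom a
  | natom a => atom a
  | par R T => copar R.neg T.neg
  | copar R T => par R.neg T.neg
  | seq R T => seq R.neg T.neg
  | ren a R => ren a R.neg

/-- Free atom names of a structure. -/
def free : Struct → Finset ℕ
  | unit => ∅
  | atom a => {a}
  | natom a => {a}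
  | par R T => R.free ∪ T.free
  | copar R T => R.free ∪ T.free
  | seq R T => R.free ∪ T.free
  | ren a R => R.free.erase a

/-- All atom names occurring in a structure (free, bound, and binder names). -/
def names : Struct → Finset ℕ
  | unit => ∅
  | atom a => {a}
  | natom a => {a}
  | par R T => R.names ∪ T.names
  | copar R T => R.names ∪ T.names
  | seq R T => R.names ∪ T.names
  | ren a R => insert a R.names

/-- `rename b a R` is `R{b/a}`: replace each free occurrence of atom `a` by `b`
(and `ā` by `b̄`). -/
def rename (b a : ℕ) : Struct → Struct
  | unit => unit
  | atom c => if c = a then atom b else atom c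
  | natom c => if c = a then natom b else natom c
  | par R T => par (rename b a R) (rename b a T)
  | copar R T => copar (rename b a R) (rename b a T)
  | seq R T => seq (rename b a R) (rename b a T)
  | ren c R => if c = a then ren c R else ren c (rename b a R)

/-- Size of a structure: the number of occurrences of atoms in it. -/
def size : Struct → ℕ
  | unit => 0
  | atom _ => 1
  | natom _ => 1
  | par R T => R.size + T.size
  | copar R T => R.size + T.size
  | seq R T => R.size + T.size
  | ren _ R => R.size

end Struct

open Struct

/-- Structural congruence on structures. -/
inductive Cong : Struct → Struct → Prop
  | refl (R) : Cong R R
  | symm : Cong R T → Cong T R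
  | trans : Cong R T → Cong T U → Cong R U
  | par_congr : Cong R R' → Cong T T' → Cong (par R T) (par R' T')
  | copar_congr : Cong R R' → Cong T T' → Cong (copar R T) (copar R' T')
  | seq_congr : Cong R R' → Cong T T' → Cong (seq R T) (seq R' T')
  | ren_congr (a) : Cong R R' → Cong (ren a R) (ren a R')
  | par_comm (R T) : Cong (par R T) (par T R)
  | par_assoc (R T U) : Cong (par (par R T) U) (par R (par T U))
  | par_unit (R) : Cong (par R unit) R
  | copar_comm (R T) : Cong (copar R T) (copar T R)
  | copar_assoc (R T U) : Cong (copar (copar R T) U) (copar R (copar T U))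
  | copar_unit (R) : Cong (copar R unit) R
  | seq_assoc (R T U) : Cong (seq (seq R T) U) (seq R (seq T U))
  | seq_unit_r (R) : Cong (seq R unit) R
  | seq_unit_l (R) : Cong (seq unit R) R
  /-- `R ≈ ⌊a⌋(R{a/b})` for a capture-free substitution of `a` for `b`. -/
  | ren_intro (a b : ℕ) (R : Struct) : a ∉ R.names →
      Cong R (ren a (R.rename a b))
  /-- α-equivalence of renaming. -/
  | ren_alpha (a b : ℕ) (R : Struct) : a ∉ R.names →
      Cong (ren b R) (ren a (R.rename a b))
  /-- Vacuous renaming. -/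
  | ren_vac (a : ℕ) (R : Struct) : a ∉ R.free → Cong (ren a R) R
  /-- Commutation of renaming binders. -/
  | ren_comm (a b : ℕ) (R : Struct) : Cong (ren a (ren b R)) (ren b (ren a R))

/-- Names of the inference rules of SBVr. -/
inductive RuleName : Type
  | aiDown | qDown | sw | rDown | aiUp | qUp | rUp
  deriving DecidableEq

/-- Shallow rule instances, read top-down: `Shallow ρ T R` means the rule `ρ`
has premise `T` and conclusion `R`. -/
inductive Shallow : RuleName → Struct → Struct → Prop
  | aiDown (a) : Shallow .aiDown unit (par (atom a) (natom a))
  | qDown (R T U V) :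
      Shallow .qDown (seq (par R T) (par U V)) (par (seq R U) (seq T V))
  | sw (R T U) : Shallow .sw (copar (par R U) T) (par (copar R T) U)
  | rDown (a R T) :
      Shallow .rDown (ren a (par R T)) (par (ren a R) (ren a T))
  | aiUp (a) : Shallow .aiUp (copar (atom a) (natom a)) unit
  | qUp (R T U V) :
      Shallow .qUp (copar (seq R T) (seq U V)) (seq (copar R U) (copar T V))
  | rUp (a R T) :
      Shallow .rUp (copar (ren a R) (ren a T)) (ren a (copar R T))

/-- Closure of a (premise, conclusion) relation under arbitrary contexts
and structural congruence. -/
inductive CtxClosure (r : Struct → Struct → Prop) : Struct → Struct → Prop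
  | base : r T R → CtxClosure r T R
  | parL (U) : CtxClosure r T R → CtxClosure r (par T U) (par R U)
  | parR (U) : CtxClosure r T R → CtxClosure r (par U T) (par U R)
  | coparL (U) : CtxClosure r T R → CtxClosure r (copar T U) (copar R U)
  | coparR (U) : CtxClosure r T R → CtxClosure r (copar U T) (copar U R)
  | seqL (U) : CtxClosure r T R → CtxClosure r (seq T U) (seq R U)
  | seqR (U) : CtxClosure r T R → CtxClosure r (seq U T) (seq U R)
  | ren (a) : CtxClosure r T R → CtxClosure r (ren a T) (ren a R)
  | congr : Cong T T' → CtxClosure r T' R' → Cong R' R → CtxClosure r T R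

/-- One inference step in a system given by a set of rule names. -/
def Step (rules : RuleName → Prop) : Struct → Struct → Prop :=
  CtxClosure (fun T R => ∃ ρ, rules ρ ∧ Shallow ρ T R)

/-- `Deriv rules T R`: there is a derivation in the system `rules` with
premise `T` and conclusion `R` (a finite composition of rule instances,
modulo structural congruence). -/
def Deriv (rules : RuleName → Prop) (T R : Struct) : Prop :=
  Relation.ReflTransGen (fun X Y => Step rules X Y ∨ Cong X Y) T R

/-- `Prov rules R`: `R` is provable, i.e. derivable from the unit. -/
def Prov (rules : RuleName → Prop) (R : Struct) : Prop :=
  Deriv rules unit R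

/-- The system BVr: the down rules ai↓, q↓, s, r↓. -/
def BVr : RuleName → Prop := fun ρ =>
  ρ = .aiDown ∨ ρ = .qDown ∨ ρ = .sw ∨ ρ = .rDown

/-- The system SBVr: BVr plus the up rules ai↑, q↑, r↑. -/
def SBVr : RuleName → Prop := fun _ => True

/-- The system SBV: the renaming-free fragment ai↓, q↓, s, ai↑, q↑. -/
def SBV : RuleName → Prop := fun ρ => ρ ≠ .rDown ∧ ρ ≠ .rUp

/-- BVr extended with the up rule q↑. -/
def BVrQ : RuleName → Prop := fun ρ => BVr ρ ∨ ρ = .qUp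

/-- Contexts: structures with a single hole. -/
inductive Ctx : Type
  | hole : Ctx
  | parL (C : Ctx) (U : Struct) : Ctx
  | parR (U : Struct) (C : Ctx) : Ctx
  | coparL (C : Ctx) (U : Struct) : Ctx
  | coparR (U : Struct) (C : Ctx) : Ctx
  | seqL (C : Ctx) (U : Struct) : Ctx
  | seqR (U : Struct) (C : Ctx) : Ctx
  | ren (a : ℕ) (C : Ctx) : Ctx

/-- Filling the hole of a context with a structure. -/
def Ctx.fill : Ctx → Struct → Struct
  | .hole, V => V
  | .parL C U, V => .par (C.fill V) U
  | .parR U C, V => .par U (C.fill V)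
  | .coparL C U, V => .copar (C.fill V) U
  | .coparR U C, V => .copar U (C.fill V)
  | .seqL C U, V => .seq (C.fill V) U
  | .seqR U C, V => .seq U (C.fill V)
  | .ren a C, V => .ren a (C.fill V)

/-- The renaming binders a context places over its hole. -/
def Ctx.binders : Ctx → Finset ℕ
  | .hole => ∅
  | .parL C _ => C.binders
  | .parR _ C => C.binders
  | .coparL C _ => C.binders
  | .coparR _ C => C.binders
  | .seqL C _ => C.binders
  | .seqR _ C => C.binders
  | .ren a C => insert a C.binders

/-- Lambda terms with explicit substitutions:
variables, abstractions, applications, and explicit substitutions `M⟨x:=P⟩`. -/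
inductive Term : Type
  | var : ℕ → Term
  | lam : ℕ → Term → Term
  | app : Term → Term → Term
  | esub : Term → ℕ → Term → Term
  deriving DecidableEq

namespace Term

/-- Free variables of a term. -/
def fv : Term → Finset ℕ
  | var x => {x}
  | lam x M => M.fv.erase x
  | app M N => M.fv ∪ N.fv
  | esub M x P => M.fv.erase x ∪ P.fv

/-- All variable names occurring in a term (free or bound). -/
def names : Term → Finset ℕ
  | var x => {x}
  | lam x M => insert x M.names
  | app M N => M.names ∪ N.names
  | esub M x P => insert x (M.names ∪ P.names)

/-- Linearity: bound variables occur free in their scope exactly once, and the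
free variables of the components of applications and substitutions are disjoint. -/
def Linear : Term → Prop
  | var _ => True
  | lam x M => x ∈ M.fv ∧ M.Linear
  | app M N => M.Linear ∧ N.Linear ∧ Disjoint M.fv N.fv
  | esub M x P => x ∈ M.fv ∧ M.Linear ∧ P.Linear ∧ Disjoint M.fv P.fv

end Term

/-- β-reduction with explicit substitutions. -/
inductive Beta : Term → Term → Prop
  | intro (x M N) : Beta (.app (.lam x M) N) (.esub M x N)
  | var (x P) : Beta (.esub (.var x) x P) P
  | lam (y x M P) : Beta (.esub (.lam y M) x P) (.lam y (.esub M x P))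
  | appR (M N x P) : x ∈ N.fv → Beta (.esub (.app M N) x P) (.app M (.esub N x P))
  | appL (M N x P) : x ∈ M.fv → Beta (.esub (.app M N) x P) (.app (.esub M x P) N)

/-- The rewriting relation `M ⇒ N`: reflexive, contextual and transitive
closure of β-reduction with explicit substitutions. -/
inductive Red : Term → Term → Prop
  | refl (M) : Red M M
  | beta : Beta M N → Red M N
  | trans : Red M P → Red P N → Red M N
  | lam (x) : Red M N → Red (.lam x M) (.lam x N)
  | appL : Red M N → Red (.app M P) (.app N P)
  | appR : Red M N → Red (.app P M) (.app P N)
  | esubL (x) : Red M N → Red (.esub M x P) (.esub N x P)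
  | esubR (x) : Red M N → Red (.esub P x M) (.esub P x N)

/-- A name fresh for a given finite set of names. -/
def freshName (s : Finset ℕ) : ℕ := (s.sup id) + 1

/-- The map `⟦·⟧` from linear lambda terms with explicit substitutions to
SBVr structures; `Term.tr M o` is `⟦M⟧o`. -/
def Term.tr : Term → ℕ → Struct
  | .var x, o => .seq (.atom x) (.natom o)
  | .lam x M, o =>
      let p := freshName (insert o (insert x M.names))
      .ren x (.ren p (.par (M.tr p) (.copar (.atom p) (.natom o))))
  | .app M N, o =>
      let q := freshName (insert o (M.names ∪ N.names))
      let p := freshName (insert q (insert o (M.names ∪ N.names)))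
      .ren p (.par (M.tr p) (.par (.ren q (N.tr q)) (.copar (.atom p) (.natom o))))
  | .esub M x P, o => .ren x (.par (M.tr o) (P.tr x))

/-- The derived rules (premise, conclusion) on translated terms:
o-ren, s-intro, s-var, s-λ, s-@l, s-@r. -/
inductive DerivedRule : Struct → Struct → Prop
  | oren (M : Term) (o p : ℕ) : p ∉ M.names → p ≠ o →
      DerivedRule (M.tr o) (.par (M.tr p) (.copar (.atom p) (.natom o)))
  | sIntro (M N : Term) (x o : ℕ) :
      DerivedRule ((Term.esub M x N).tr o) ((Term.app (.lam x M) N).tr o)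
  | sVar (P : Term) (x o : ℕ) :
      DerivedRule (P.tr o) ((Term.esub (.var x) x P).tr o)
  | sLam (M P : Term) (x y o : ℕ) :
      DerivedRule ((Term.lam y (.esub M x P)).tr o) ((Term.esub (.lam y M) x P).tr o)
  | sAppL (M N P : Term) (x o : ℕ) : x ∈ M.fv →
      DerivedRule ((Term.app (.esub M x P) N).tr o) ((Term.esub (.app M N) x P).tr o)
  | sAppR (M N P : Term) (x o : ℕ) : x ∈ N.fv →
      DerivedRule ((Term.app M (.esub N x P)).tr o) ((Term.esub (.app M N) x P).tr o)

/-- Derivations composed only of instances of the derived rules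
(applied in arbitrary contexts, modulo congruence). -/
def DerivedDeriv : Struct → Struct → Prop :=
  Relation.ReflTransGen (fun X Y => CtxClosure DerivedRule X Y ∨ Cong X Y)

end DI

/-!
The proof is semantic. The Lindenbaum algebra of BVr is an ordered set with two products, par and
seq, which share their unit and satisfy the exchange law q↓; its lower sets form a quantale for
both. Interpret a structure by a pair of lower sets, one for the structure and one for its negation,
such that the par of the two is provable. The pair of a par is given by residuation, that of a seq
componentwise, and that of a copar by De Morgan duality. Negation swaps the components of a pair
and reverses the order, so each up rule is sound because its dual down rule is.

By induction, the lower set that interprets `R` contains `R` itself; for a copar this takes only the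
switch rule. When `R` is derivable from the unit, soundness puts that lower set inside the one that
interprets the unit, which consists of the structures provable in BVr.
-/

namespace DI

/-- Concurrent monoids: `+` plays the role of par and `*` that of seq; they share their unit and
satisfy the exchange law, which is rule q↓. The order is that of proof search, in which the
conclusion of a rule lies below its premise, whence the direction of the inequality. -/
class IsConcurrentMonoid (M : Type*) [AddMonoid M] [Monoid M] [LE M] : Prop where
  one_eq_zero : (1 : M) = 0
  mul_add_mul_le (a b c d : M) : a * b + c * d ≤ (a + c) * (b + d)

open IsConcurrentMonoid

namespace LowerSetConvolution

open scoped Pointwise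

variable {M : Type*} [Preorder M]

-- Scoped, because Mathlib has another product of lower sets over ordered groups.
@[to_additive]
scoped instance [Mul M] : Mul (LowerSet M) := ⟨fun A B ↦ lowerClosure (A * B : Set M)⟩

@[to_additive]
scoped instance [One M] : One (LowerSet M) := ⟨LowerSet.Iic 1⟩

@[to_additive]
theorem mem_mul [Mul M] {A B : LowerSet M} {x : M} :
    x ∈ A * B ↔ ∃ a ∈ A, ∃ b ∈ B, x ≤ a * b :=
  mem_lowerClosure.trans Set.exists_mem_image2

@[to_additive]
theorem mem_one [One M] {x : M} : x ∈ (1 : LowerSet M) ↔ x ≤ 1 :=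
  Iff.rfl

@[to_additive]
scoped instance [Monoid M] [MulLeftMono M] [MulRightMono M] : Monoid (LowerSet M) where
  mul_assoc A B C := by
    ext x
    simp only [SetLike.mem_coe, mem_mul]
    constructor
    · rintro ⟨y, ⟨a, ha, b, hb, hy⟩, c, hc, hx⟩
      exact ⟨a, ha, b * c, ⟨b, hb, c, hc, le_rfl⟩, mul_assoc a b c ▸ hx.trans (by gcongr)⟩
    · rintro ⟨a, ha, y, ⟨b, hb, c, hc, hy⟩, hx⟩
      exact ⟨a * b, ⟨a, ha, b, hb, le_rfl⟩, c, hc, mul_assoc a b c ▸ hx.trans (by gcongr)⟩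
  one_mul A := by
    ext x
    simp only [SetLike.mem_coe, mem_mul, mem_one]
    constructor
    · rintro ⟨e, he, a, ha, hx⟩
      exact A.lower (hx.trans (mul_le_of_le_one_left' he)) ha
    · exact fun hx ↦ ⟨1, le_rfl, x, hx, (one_mul x).ge⟩
  mul_one A := by
    ext x
    simp only [SetLike.mem_coe, mem_mul, mem_one]
    constructor
    · rintro ⟨a, ha, e, he, hx⟩
      exact A.lower (hx.trans (mul_le_of_le_one_right' he)) ha
    · exact fun hx ↦ ⟨x, hx, 1, le_rfl, (mul_one x).ge⟩

@[to_additive]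
scoped instance [CommMonoid M] [MulLeftMono M] : CommMonoid (LowerSet M) where
  mul_comm A B := congrArg lowerClosure (mul_comm (A : Set M) B)

@[to_additive]
scoped instance [Monoid M] [MulLeftMono M] [MulRightMono M] : IsQuantale (LowerSet M) where
  mul_sSup_distrib A S := by
    ext x
    simp only [SetLike.mem_coe, mem_mul, LowerSet.mem_sSup_iff, LowerSet.mem_iSup_iff]
    tauto
  sSup_mul_distrib S A := by
    ext x
    simp only [SetLike.mem_coe, mem_mul, LowerSet.mem_sSup_iff, LowerSet.mem_iSup_iff]
    tauto

scoped instance [AddCommMonoid M] [AddLeftMono M] [Monoid M] [MulLeftMono M] [MulRightMono M]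
    [IsConcurrentMonoid M] : IsConcurrentMonoid (LowerSet M) where
  one_eq_zero := congrArg LowerSet.Iic one_eq_zero
  mul_add_mul_le A B C D x := by
    simp only [SetLike.mem_coe, mem_mul, mem_add]
    rintro ⟨y, ⟨a, ha, b, hb, hy⟩, z, ⟨c, hc, d, hd, hz⟩, hx⟩
    exact ⟨a + c, ⟨a, ha, c, hc, le_rfl⟩, b + d, ⟨b, hb, d, hd, le_rfl⟩,
      hx.trans ((add_le_add hy hz).trans (mul_add_mul_le a b c d))⟩

end LowerSetConvolution

/-- The Chu construction over an ordered monoid `V` with dualizing object `0`. It interprets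
structures: `con` stands for a structure and `pro` for its negation, so their par is provable. -/
@[ext]
structure Chu (V : Type*) [LE V] [AddMonoid V] where
  pro : V
  con : V
  pro_add_con_le : pro + con ≤ 0

namespace Chu

variable {V : Type*}

section Order

variable [PartialOrder V] [AddCommMonoid V]

instance : PartialOrder (Chu V) where
  le A B := A.pro ≤ B.pro ∧ B.con ≤ A.con
  le_refl _ := ⟨le_rfl, le_rfl⟩
  le_trans _ _ _ h h' := ⟨h.1.trans h'.1, h'.2.trans h.2⟩
  le_antisymm _ _ h h' := Chu.ext (h.1.antisymm h'.1) (h'.2.antisymm h.2)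

instance : InvolutiveNeg (Chu V) where
  neg A := ⟨A.con, A.pro, add_comm A.pro A.con ▸ A.pro_add_con_le⟩
  neg_neg _ := rfl

protected theorem neg_le_neg {A B : Chu V} (h : A ≤ B) : -B ≤ -A :=
  ⟨h.2, h.1⟩

instance : Zero (Chu V) :=
  ⟨0, 0, (add_zero 0).le⟩

end Order

section Par

open AddQuantale

variable [CompleteLattice V] [AddCommMonoid V] [IsAddQuantale V]

instance : Add (Chu V) where
  add A B :=
    { pro := (A.con ⇨ₗ B.pro) ⊓ (B.con ⇨ₗ A.pro)
      con := A.con + B.con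
      pro_add_con_le := by
        have h : (A.con ⇨ₗ B.pro) ⊓ (B.con ⇨ₗ A.pro) + A.con ≤ B.pro :=
          leftAddResiduation_le_iff_add_le.1 inf_le_left
        rw [← add_assoc]
        grw [h]
        exact B.pro_add_con_le }

theorem con_add (A B : Chu V) : (A + B).con = A.con + B.con :=
  rfl

theorem le_pro_add_iff {A B : Chu V} {x : V} :
    x ≤ (A + B).pro ↔ x + A.con ≤ B.pro ∧ x + B.con ≤ A.pro :=
  le_inf_iff.trans (and_congr leftAddResiduation_le_iff_add_le leftAddResiduation_le_iff_add_le)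

theorem pro_add_add_con_left_le (A B : Chu V) : (A + B).pro + A.con ≤ B.pro :=
  (le_pro_add_iff.1 le_rfl).1

theorem pro_add_add_con_right_le (A B : Chu V) : (A + B).pro + B.con ≤ A.pro :=
  (le_pro_add_iff.1 le_rfl).2

protected theorem add_comm (A B : Chu V) : A + B = B + A :=
  Chu.ext (inf_comm _ _) (add_comm A.con B.con)

protected theorem add_zero (A : Chu V) : A + 0 = A := by
  refine Chu.ext (eq_of_forall_le_iff fun x ↦ ?_) (add_zero A.con)
  rw [le_pro_add_iff]
  refine ⟨fun h ↦ (add_zero x).ge.trans h.2, fun h ↦ ⟨?_, (add_zero x).trans_le h⟩⟩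
  grw [h]
  exact A.pro_add_con_le

instance : AddCommMonoid (Chu V) where
  add_assoc A B C := by
    refine Chu.ext (eq_of_forall_le_iff fun x ↦ ?_) (add_assoc A.con B.con C.con)
    simp only [le_pro_add_iff, con_add, add_assoc, add_comm C.con, and_assoc]
  zero_add A := by rw [Chu.add_comm, Chu.add_zero]
  add_zero := Chu.add_zero
  add_comm := Chu.add_comm
  nsmul := nsmulRec

instance : IsOrderedAddMonoid (Chu V) where
  add_le_add_left A B h C := by
    refine ⟨le_pro_add_iff.2 ⟨?_, ?_⟩, add_le_add_left h.2 C.con⟩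
    · grw [h.2]
      exact pro_add_add_con_left_le A C
    · exact (pro_add_add_con_right_le A C).trans h.1

theorem zero_le_add_neg (A : Chu V) : 0 ≤ A + -A :=
  ⟨le_pro_add_iff.2 ⟨(zero_add A.con).le, (zero_add A.pro).le⟩,
    (add_comm A.con A.pro).trans_le A.pro_add_con_le⟩

/-- The De Morgan dual of par, which interprets the copar of structures. -/
def copar (A B : Chu V) : Chu V :=
  -(-A + -B)

theorem le_con_copar_iff {A B : Chu V} {x : V} :
    x ≤ (copar A B).con ↔ x + A.pro ≤ B.con ∧ x + B.pro ≤ A.con :=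
  le_pro_add_iff

theorem copar_comm (A B : Chu V) : copar A B = copar B A :=
  congrArg Neg.neg (add_comm (-A) (-B))

theorem copar_assoc (A B C : Chu V) : copar (copar A B) C = copar A (copar B C) :=
  congrArg Neg.neg (add_assoc (-A) (-B) (-C))

theorem copar_zero (A : Chu V) : copar A 0 = A :=
  congrArg Neg.neg (add_zero (-A))

theorem copar_le_copar {A B C D : Chu V} (h : A ≤ B) (h' : C ≤ D) : copar A C ≤ copar B D :=
  Chu.neg_le_neg (add_le_add (Chu.neg_le_neg h) (Chu.neg_le_neg h'))

theorem pro_copar_add_le_pro_add_copar (A B C : Chu V) :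
    (copar (A + B) C).pro ≤ (copar A C + B).pro := by
  refine le_pro_add_iff.2 ⟨?_, ?_⟩
  · have h : (copar A C).con + C.pro ≤ A.con := (le_con_copar_iff.1 le_rfl).2
    calc (A + B).pro + C.pro + (copar A C).con
        = (A + B).pro + ((copar A C).con + C.pro) := by rw [add_assoc, add_comm C.pro]
      _ ≤ (A + B).pro + A.con := by gcongr
      _ ≤ B.pro := pro_add_add_con_left_le A B
  · calc (A + B).pro + C.pro + B.con = (A + B).pro + B.con + C.pro := add_right_comm _ _ _
      _ ≤ A.pro + C.pro := by grw [pro_add_add_con_right_le A B]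

-- Switch is self-dual: negation exchanges its two sides and the roles of `B` and `C`.
theorem copar_add_le_add_copar (A B C : Chu V) : copar (A + B) C ≤ copar A C + B :=
  ⟨pro_copar_add_le_pro_add_copar A B C, pro_copar_add_le_pro_add_copar (-A) (-C) (-B)⟩

theorem copar_neg_le_zero (A : Chu V) : copar A (-A) ≤ 0 :=
  Chu.neg_le_neg (zero_le_add_neg (-A))

end Par

section Seq

section Monoid

variable [PartialOrder V] [AddCommMonoid V] [Monoid V] [IsConcurrentMonoid V]

instance : One (Chu V) :=
  ⟨1, 1, by rw [IsConcurrentMonoid.one_eq_zero, add_zero]⟩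

theorem one_eq_zero : (1 : Chu V) = 0 :=
  Chu.ext IsConcurrentMonoid.one_eq_zero IsConcurrentMonoid.one_eq_zero

variable [MulLeftMono V] [MulRightMono V]

instance : Mul (Chu V) where
  mul A B :=
    { pro := A.pro * B.pro
      con := A.con * B.con
      pro_add_con_le := calc
        A.pro * B.pro + A.con * B.con
          ≤ (A.pro + A.con) * (B.pro + B.con) := mul_add_mul_le _ _ _ _
        _ ≤ 0 * 0 := mul_le_mul' A.pro_add_con_le B.pro_add_con_le
        _ = 0 := by rw [← IsConcurrentMonoid.one_eq_zero, one_mul] }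

instance : Monoid (Chu V) where
  mul_assoc A B C := Chu.ext (mul_assoc A.pro B.pro C.pro) (mul_assoc A.con B.con C.con)
  one_mul A := Chu.ext (one_mul A.pro) (one_mul A.con)
  mul_one A := Chu.ext (mul_one A.pro) (mul_one A.con)

instance : MulLeftMono (Chu V) :=
  ⟨fun A _ _ h ↦ ⟨mul_le_mul_right h.1 A.pro, mul_le_mul_right h.2 A.con⟩⟩

instance : MulRightMono (Chu V) :=
  ⟨fun A _ _ h ↦ ⟨mul_le_mul_left h.1 A.pro, mul_le_mul_left h.2 A.con⟩⟩

end Monoid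

variable [CompleteLattice V] [AddCommMonoid V] [IsAddQuantale V] [Monoid V] [MulLeftMono V]
  [MulRightMono V] [IsConcurrentMonoid V]

theorem add_mul_add_le (A B C D : Chu V) : (A + B) * (C + D) ≤ A * C + B * D := by
  refine ⟨le_pro_add_iff.2 ⟨?_, ?_⟩, mul_add_mul_le A.con C.con B.con D.con⟩
  · exact (mul_add_mul_le _ _ _ _).trans
      (mul_le_mul' (pro_add_add_con_left_le A B) (pro_add_add_con_left_le C D))
  · exact (mul_add_mul_le _ _ _ _).trans
      (mul_le_mul' (pro_add_add_con_right_le A B) (pro_add_add_con_right_le C D))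

theorem copar_mul_le (A B C D : Chu V) : copar (A * B) (C * D) ≤ copar A C * copar B D :=
  Chu.neg_le_neg (add_mul_add_le (-A) (-C) (-B) (-D))

end Seq

end Chu

open Struct

section Interpretation

variable {V : Type*} [CompleteLattice V] [AddCommMonoid V] [IsAddQuantale V] [Monoid V]
  [MulLeftMono V] [MulRightMono V] [IsConcurrentMonoid V] (X : Chu V)

/-- The interpretation of structures that sends every atom to `X`. The names of atoms have to be
forgotten, because structural congruence identifies all atoms; see `Cong.atom_atom`. -/
def interp : Struct → Chu V
  | .unit => 0
  | .atom _ => X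
  | .natom _ => -X
  | .par R T => interp R + interp T
  | .copar R T => (interp R).copar (interp T)
  | .seq R T => interp R * interp T
  | .ren _ R => interp R

theorem interp_rename (a b : ℕ) (R : Struct) : interp X (R.rename a b) = interp X R := by
  induction R with
  | unit => rfl
  | atom c | natom c => rw [rename]; split <;> rfl
  | par R T hR hT | copar R T hR hT | seq R T hR hT => simp only [rename, interp, hR, hT]
  | ren c R hR => rw [rename]; split <;> simp only [interp, hR]

theorem interp_eq_of_cong {R T : Struct} (h : Cong R T) : interp X R = interp X T := by
  induction h with
  | refl | ren_vac | ren_comm => rfl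
  | symm _ ih => exact ih.symm
  | trans _ _ ih₁ ih₂ => exact ih₁.trans ih₂
  | par_congr _ _ ih₁ ih₂ | copar_congr _ _ ih₁ ih₂ | seq_congr _ _ ih₁ ih₂ =>
    simp only [interp, ih₁, ih₂]
  | ren_congr _ _ ih => exact ih
  | par_comm => exact add_comm _ _
  | par_assoc => exact add_assoc _ _ _
  | par_unit => exact add_zero _
  | copar_comm => exact Chu.copar_comm _ _
  | copar_assoc => exact Chu.copar_assoc _ _ _
  | copar_unit => exact Chu.copar_zero _
  | seq_assoc => exact mul_assoc _ _ _
  | seq_unit_r => simp only [interp, ← Chu.one_eq_zero, mul_one]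
  | seq_unit_l => simp only [interp, ← Chu.one_eq_zero, one_mul]
  | ren_intro a b R | ren_alpha a b R => exact (interp_rename X a b R).symm

theorem Shallow.interp_le {ρ : RuleName} {T R : Struct} (h : Shallow ρ T R) :
    interp X T ≤ interp X R := by
  cases h with
  | aiDown => exact Chu.zero_le_add_neg X
  | qDown => exact Chu.add_mul_add_le _ _ _ _
  | sw => exact Chu.copar_add_le_add_copar _ _ _
  | aiUp => exact Chu.copar_neg_le_zero X
  | qUp => exact Chu.copar_mul_le _ _ _ _
  | rDown | rUp => exact le_rfl

variable {rules : RuleName → Prop} {T R : Struct}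

theorem Step.interp_le (h : Step rules T R) : interp X T ≤ interp X R := by
  induction h with
  | base h => exact h.choose_spec.2.interp_le X
  | parL _ _ ih => exact add_le_add ih le_rfl
  | parR _ _ ih => exact add_le_add le_rfl ih
  | coparL _ _ ih => exact Chu.copar_le_copar ih le_rfl
  | coparR _ _ ih => exact Chu.copar_le_copar le_rfl ih
  | seqL _ _ ih => exact mul_le_mul' ih le_rfl
  | seqR _ _ ih => exact mul_le_mul' le_rfl ih
  | ren _ _ ih => exact ih
  | congr hT _ hR ih => rwa [interp_eq_of_cong X hT, ← interp_eq_of_cong X hR]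

theorem Deriv.interp_le (h : Deriv rules T R) : interp X T ≤ interp X R := by
  induction h with
  | refl => exact le_rfl
  | tail _ h ih => exact ih.trans (h.elim (·.interp_le X) fun h ↦ (interp_eq_of_cong X h).le)

end Interpretation

section Derivation

namespace Cong

theorem ren_self (a : ℕ) (R : Struct) : Cong R (ren a R) := by
  obtain ⟨b, hb⟩ := Infinite.exists_notMem_finset R.names
  exact (ren_intro b a R hb).trans (ren_alpha b a R hb).symm

theorem rename_of_notMem_names {a : ℕ} (b : ℕ) {R : Struct} (h : a ∉ R.names) :
    Cong R (R.rename a b) :=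
  (ren_intro a b R h).trans (ren_self a _).symm

theorem atom_atom (a b : ℕ) : Cong (atom a) (atom b) := by
  obtain rfl | h := eq_or_ne b a
  · exact refl _
  · have := rename_of_notMem_names (a := b) (R := atom a) a (by simpa [names] using h)
    rwa [rename, if_pos rfl] at this

theorem natom_natom (a b : ℕ) : Cong (natom a) (natom b) := by
  obtain rfl | h := eq_or_ne b a
  · exact refl _
  · have := rename_of_notMem_names (a := b) (R := natom a) a (by simpa [names] using h)
    rwa [rename, if_pos rfl] at this

end Cong

variable {rules : RuleName → Prop} {R R' T T' : Struct}

theorem Cong.deriv (h : Cong R T) : Deriv rules R T :=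
  .single (.inr h)

theorem Shallow.deriv {ρ : RuleName} (h : Shallow ρ R T) (hρ : rules ρ) : Deriv rules R T :=
  .single (.inl (.base ⟨ρ, hρ, h⟩))

theorem Deriv.par_congr (h : Deriv rules R T) (h' : Deriv rules R' T') :
    Deriv rules (par R R') (par T T') :=
  (h.lift (par · R') fun _ _ ↦ Or.imp (.parL R') (Cong.par_congr · (.refl R'))).trans
    (h'.lift (par T) fun _ _ ↦ Or.imp (.parR T) (Cong.par_congr (.refl T)))

theorem Deriv.seq_congr (h : Deriv rules R T) (h' : Deriv rules R' T') :
    Deriv rules (seq R R') (seq T T') :=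
  (h.lift (seq · R') fun _ _ ↦ Or.imp (.seqL R') (Cong.seq_congr · (.refl R'))).trans
    (h'.lift (seq T) fun _ _ ↦ Or.imp (.seqR T) (Cong.seq_congr (.refl T)))

theorem Deriv.copar_congr_left (U : Struct) (h : Deriv rules R T) :
    Deriv rules (copar R U) (copar T U) :=
  h.lift (copar · U) fun _ _ ↦ Or.imp (.coparL U) (Cong.copar_congr · (.refl U))

theorem Prov.deriv_par_copar {U : Struct} (h : Prov rules (par R U)) (hsw : rules .sw)
    (T : Struct) : Deriv rules T (par (copar R T) U) :=
  have unit_copar : Cong T (copar unit T) := (Cong.copar_unit T).symm.trans (.copar_comm T unit)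
  unit_copar.deriv.trans <| (Deriv.copar_congr_left T h).trans <| (Shallow.sw R T U).deriv hsw

end Derivation

instance : Preorder Struct where
  le R T := Deriv BVr T R
  le_refl _ := .refl
  le_trans _ _ _ h h' := h'.trans h

/-- The Lindenbaum algebra of BVr: structures up to mutual derivability. Classes are ordered by
proof search, so that the elements below `0` are the provable ones. -/
abbrev Lindenbaum : Type :=
  Antisymmetrization Struct (· ≤ ·)

namespace Lindenbaum

/-- The class of a structure in the Lindenbaum algebra. -/
abbrev mk (R : Struct) : Lindenbaum :=
  toAntisymmetrization (· ≤ ·) R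

theorem mk_eq_mk_of_cong {R T : Struct} (h : Cong R T) : mk R = mk T :=
  Quotient.sound ⟨h.symm.deriv, h.deriv⟩

instance : Zero Lindenbaum := ⟨mk unit⟩

instance : One Lindenbaum := ⟨mk unit⟩

instance : Add Lindenbaum :=
  ⟨Quotient.map₂ par fun _ _ h _ _ h' ↦ ⟨h.1.par_congr h'.1, h.2.par_congr h'.2⟩⟩

instance : Mul Lindenbaum :=
  ⟨Quotient.map₂ seq fun _ _ h _ _ h' ↦ ⟨h.1.seq_congr h'.1, h.2.seq_congr h'.2⟩⟩

instance : AddCommMonoid Lindenbaum where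
  add_assoc := by rintro ⟨R⟩ ⟨T⟩ ⟨U⟩; exact mk_eq_mk_of_cong (.par_assoc R T U)
  add_comm := by rintro ⟨R⟩ ⟨T⟩; exact mk_eq_mk_of_cong (.par_comm R T)
  add_zero := by rintro ⟨R⟩; exact mk_eq_mk_of_cong (.par_unit R)
  zero_add := by rintro ⟨R⟩; exact mk_eq_mk_of_cong ((Cong.par_comm unit R).trans (.par_unit R))
  nsmul := nsmulRec

instance : Monoid Lindenbaum where
  mul_assoc := by rintro ⟨R⟩ ⟨T⟩ ⟨U⟩; exact mk_eq_mk_of_cong (.seq_assoc R T U)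
  mul_one := by rintro ⟨R⟩; exact mk_eq_mk_of_cong (.seq_unit_r R)
  one_mul := by rintro ⟨R⟩; exact mk_eq_mk_of_cong (.seq_unit_l R)

instance : AddLeftMono Lindenbaum :=
  ⟨by rintro ⟨R⟩ ⟨T⟩ ⟨U⟩ h; exact Deriv.par_congr .refl h⟩

instance : MulLeftMono Lindenbaum :=
  ⟨by rintro ⟨R⟩ ⟨T⟩ ⟨U⟩ h; exact Deriv.seq_congr .refl h⟩

instance : MulRightMono Lindenbaum :=
  ⟨by rintro ⟨R⟩ ⟨T⟩ ⟨U⟩ h; exact Deriv.seq_congr h .refl⟩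

instance : IsConcurrentMonoid Lindenbaum where
  one_eq_zero := rfl
  mul_add_mul_le := by
    rintro ⟨R⟩ ⟨T⟩ ⟨U⟩ ⟨V⟩
    exact (Shallow.qDown R U T V).deriv (.inr (.inl rfl))

theorem mk_natom_add_mk_atom_le (a : ℕ) : mk (natom a) + mk (atom a) ≤ 0 :=
  ((Shallow.aiDown a).deriv (.inl rfl)).trans (Cong.par_comm _ _).deriv

theorem mk_copar_add_le {R : Struct} {p : Lindenbaum} (h : mk R + p ≤ 0) (T : Struct) :
    mk (copar R T) + p ≤ mk T := by
  obtain ⟨P⟩ := p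
  exact Prov.deriv_par_copar h (.inr (.inr (.inl rfl))) T

end Lindenbaum

open Lindenbaum LowerSetConvolution

/-- The element of the Chu model over the lower sets of the Lindenbaum algebra that interprets
every atom. -/
def atomModel : Chu (LowerSet Lindenbaum) where
  pro := .Iic (mk (natom 0))
  con := .Iic (mk (atom 0))
  pro_add_con_le := by
    intro x hx
    obtain ⟨y, hy, z, hz, hx⟩ := mem_add.1 hx
    exact hx.trans <| (add_le_add hy hz).trans <| mk_natom_add_mk_atom_le 0

theorem Iic_mk_copar_add_pro_le {A B : Chu (LowerSet Lindenbaum)} {R T : Struct}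
    (hR : mk R ∈ A.con) (hT : mk T ∈ B.con) :
    LowerSet.Iic (mk (copar R T)) + A.pro ≤ B.con := by
  intro x hx
  obtain ⟨y, hy, p, hp, hx⟩ := mem_add.1 hx
  have provable : mk R + p ≤ 0 :=
    A.pro_add_con_le <| mem_add.2 ⟨p, hp, mk R, hR, (add_comm (mk R) p).le⟩
  exact B.con.lower (hx.trans <| (add_le_add_left hy p).trans <| mk_copar_add_le provable T) hT

theorem mk_mem_con_copar {A B : Chu (LowerSet Lindenbaum)} {R T : Struct}
    (hR : mk R ∈ A.con) (hT : mk T ∈ B.con) : mk (copar R T) ∈ (A.copar B).con := by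
  refine LowerSet.Iic_le.1 (Chu.le_con_copar_iff.2 ⟨Iic_mk_copar_add_pro_le hR hT, ?_⟩)
  rw [mk_eq_mk_of_cong (.copar_comm R T)]
  exact Iic_mk_copar_add_pro_le hT hR

theorem mk_mem_con_interp (R : Struct) : mk R ∈ (interp atomModel R).con := by
  induction R with
  | unit => exact mem_zero.2 le_rfl
  | atom a => exact (mk_eq_mk_of_cong (.atom_atom a 0)).le
  | natom a => exact (mk_eq_mk_of_cong (.natom_natom a 0)).le
  | par R T hR hT => exact mem_add.2 ⟨mk R, hR, mk T, hT, le_rfl⟩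
  | copar R T hR hT => exact mk_mem_con_copar hR hT
  | seq R T hR hT => exact mem_mul.2 ⟨mk R, hR, mk T, hT, le_rfl⟩
  | ren a R hR => rwa [← mk_eq_mk_of_cong (.ren_self a R)]

theorem up_fragment_admissible_general {rules : RuleName → Prop} {R : Struct}
    (h : Prov rules R) : Prov BVr R :=
  have con_interp_le : (interp atomModel R).con ≤ 0 := (Deriv.interp_le atomModel h).2
  have mk_le_zero : mk R ≤ 0 := mem_zero.1 (con_interp_le (mk_mem_con_interp R))
  toAntisymmetrization_le_toAntisymmetrization_iff.1 mk_le_zero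

/-- Admissibility of the up fragment: each of ai↑, q↑, r↑ is admissible for BVr:
every structure provable in BVr extended with any of these up rules is already
provable in BVr. -/
theorem up_fragment_admissible (ρ : RuleName)
    (hρ : ρ = .aiUp ∨ ρ = .qUp ∨ ρ = .rUp) (R : Struct)
    (h : Prov (fun σ => BVr σ ∨ σ = ρ) R) : Prov BVr R :=
  up_fragment_admissible_general h

end DI
end

section
/- Context extrusion: for all structures R, T and every context S{ }, there is a derivation using only the rules q↓, s, r↓ (applied in arbitrary contexts) from premise S{[R;T]} to conclusion [S{R};T]. -/
namespace DI

/-- The rules q↓, s, r↓. -/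
def ExtRules : RuleName → Prop := fun ρ => ρ = .qDown ∨ ρ = .sw ∨ ρ = .rDown

/-!
Move `T` outwards through the constructors of the context, starting at the hole. It passes a par
by associativity and commutativity, and a copar by the switch rule. It passes a seq and a binder
because q↓ and r↓ release it wrapped only in something congruence removes: a unit, in `⟨T;∘⟩` or
`⟨∘;T⟩`, and a vacuous binder, in `⌊a⌋T`.
-/

section

variable {rules : RuleName → Prop} {X Y : Struct}

theorem Cong.fill (h : Cong X Y) : ∀ C : Ctx, Cong (C.fill X) (C.fill Y)
  | .hole => h
  | .parL C U => .par_congr (h.fill C) (.refl U)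
  | .parR U C => .par_congr (.refl U) (h.fill C)
  | .coparL C U => .copar_congr (h.fill C) (.refl U)
  | .coparR U C => .copar_congr (.refl U) (h.fill C)
  | .seqL C U => .seq_congr (h.fill C) (.refl U)
  | .seqR U C => .seq_congr (.refl U) (h.fill C)
  | .ren a C => .ren_congr a (h.fill C)

theorem CtxClosure.fill {r : Struct → Struct → Prop} (h : CtxClosure r X Y) :
    ∀ C : Ctx, CtxClosure r (C.fill X) (C.fill Y)
  | .hole => h
  | .parL C U => .parL U (h.fill C)
  | .parR U C => .parR U (h.fill C)
  | .coparL C U => .coparL U (h.fill C)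
  | .coparR U C => .coparR U (h.fill C)
  | .seqL C U => .seqL U (h.fill C)
  | .seqR U C => .seqR U (h.fill C)
  | .ren a C => .ren a (h.fill C)

theorem Deriv.fill (h : Deriv rules X Y) (C : Ctx) : Deriv rules (C.fill X) (C.fill Y) :=
  Relation.ReflTransGen.lift C.fill (fun _ _ => Or.imp (CtxClosure.fill · C) (Cong.fill · C)) _ _ h

theorem Deriv.of_cong (h : Cong X Y) : Deriv rules X Y :=
  .single (.inr h)

theorem Deriv.of_shallow {X' Y' : Struct} {ρ : RuleName} (hρ : rules ρ) (hX : Cong X X')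
    (h : Shallow ρ X' Y') (hY : Cong Y' Y) : Deriv rules X Y :=
  .single (.inl (.congr hX (.base ⟨ρ, hρ, h⟩) hY))

end

section

open Struct

variable {rules : RuleName → Prop} (R T U : Struct)

theorem Cong.par_right_comm : Cong (par (par R T) U) (par (par R U) T) :=
  (Cong.par_assoc R T U).trans <|
    (Cong.par_congr (.refl R) (.par_comm T U)).trans (.symm (.par_assoc R U T))

theorem Deriv.copar_par_left (hs : rules .sw) :
    Deriv rules (copar (par R T) U) (par (copar R U) T) :=
  .of_shallow hs (.refl _) (.sw R U T) (.refl _)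

theorem Deriv.copar_par_right (hs : rules .sw) :
    Deriv rules (copar U (par R T)) (par (copar U R) T) :=
  .of_shallow hs (.copar_comm U (par R T)) (.sw R U T) (.par_congr (.copar_comm R U) (.refl T))

theorem Deriv.seq_par_left (hq : rules .qDown) :
    Deriv rules (seq (par R T) U) (par (seq R U) T) :=
  .of_shallow hq (.seq_congr (.refl (par R T)) (.symm (.par_unit U))) (.qDown R T U unit)
    (.par_congr (.refl (seq R U)) (.seq_unit_r T))

theorem Deriv.seq_par_right (hq : rules .qDown) :
    Deriv rules (seq U (par R T)) (par (seq U R) T) :=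
  .of_shallow hq (.seq_congr (.symm (.par_unit U)) (.refl (par R T))) (.qDown U unit R T)
    (.par_congr (.refl (seq U R)) (.seq_unit_l T))

theorem Deriv.ren_par {a : ℕ} {T : Struct} (hr : rules .rDown) (ha : a ∉ T.free) :
    Deriv rules (ren a (par R T)) (par (ren a R) T) :=
  .of_shallow hr (.refl _) (.rDown a R T) (.par_congr (.refl (ren a R)) (.ren_vac a T ha))

end

/-- Context extrusion: there is a derivation using only q↓, s, r↓ from premise
`S{[R;T]}` to conclusion `[S{R};T]`, provided the hole of `S{ }` does not occur
beneath a renaming binder capturing free atoms of `T`. -/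
theorem context_extrusion (R T : Struct) (S : Ctx)
    (hS : ∀ b ∈ S.binders, b ∉ T.free) :
    Deriv ExtRules (S.fill (.par R T)) (.par (S.fill R) T) := by
  have hq : ExtRules .qDown := .inl rfl
  have hs : ExtRules .sw := .inr (.inl rfl)
  have hr : ExtRules .rDown := .inr (.inr rfl)
  induction S with
  | hole => exact .refl
  | parL C U ih =>
    exact ((ih hS).fill (.parL .hole U)).trans
      (Deriv.of_cong (.par_right_comm (C.fill R) T U))
  | parR U C ih =>
    exact ((ih hS).fill (.parR U .hole)).trans
      (Deriv.of_cong (Cong.symm (.par_assoc U (C.fill R) T)))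
  | coparL C U ih =>
    exact ((ih hS).fill (.coparL .hole U)).trans
      (Deriv.copar_par_left (C.fill R) T U hs)
  | coparR U C ih =>
    exact ((ih hS).fill (.coparR U .hole)).trans
      (Deriv.copar_par_right (C.fill R) T U hs)
  | seqL C U ih =>
    exact ((ih hS).fill (.seqL .hole U)).trans
      (Deriv.seq_par_left (C.fill R) T U hq)
  | seqR U C ih =>
    exact ((ih hS).fill (.seqR U .hole)).trans
      (Deriv.seq_par_right (C.fill R) T U hq)
  | ren a C ih =>
    obtain ⟨ha, hC⟩ := (Finset.forall_mem_insert _ _ _).mp hS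
    exact ((ih hC).fill (.ren a .hole)).trans
      (Deriv.ren_par (C.fill R) hr ha)

end DI
end
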